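/- The products v_{2i_1−1}⋯v_{2i_m−1} · β_{p_1q_1}⋯β_{p_rq_r} · γ_{p′_1q′_1}⋯γ_{p′_sq′_s} · α_{p″_1q″_1}⋯α_{p″_tq″_t} · u_{2j_1−1}⋯u_{2j_n−1}, taken over all m, r, s, t, n ≥ 0 and all admissible index data (with 1 ≤ p_ξ < q_ξ ≤ d, 1 ≤ p″_σ < q″_σ ≤ d, 1 ≤ p′_μ, q′_μ ≤ d, 1 ≤ i_1 ≤ ⋯ ≤ i_m ≤ d, 1 ≤ j_1 ≤ ⋯ ≤ j_n ≤ d) such that among the β-, γ- and α-factors no two intersect and no factor covers any of the v- or u-factors, are pairwise distinct and form a K-vector space basis of S^δ = ker δ_S. -/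

import Mathlib

open MvPolynomial

namespace Stmt2

/-- The polynomial ring `S = K[u_1, …, u_{2d}, v_1, …, v_{2d}]`, where the variable
`X (Sum.inl (i, 0))` is `u_{2i-1}`, `X (Sum.inl (i, 1))` is `u_{2i}`,
`X (Sum.inr (i, 0))` is `v_{2i-1}` and `X (Sum.inr (i, 1))` is `v_{2i}`. -/
abbrev S (K : Type*) [Field K] (d : ℕ) : Type _ :=
  MvPolynomial ((Fin d × Fin 2) ⊕ (Fin d × Fin 2)) K

variable (K : Type*) [Field K] (d : ℕ)

noncomputable def u (j : Fin d × Fin 2) : S K d := X (Sum.inl j)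

noncomputable def v (j : Fin d × Fin 2) : S K d := X (Sum.inr j)

/-- `α_{pq} = u_{2p-1} u_{2q} - u_{2p} u_{2q-1}`. -/
noncomputable def α (p q : Fin d) : S K d :=
  u K d (p, 0) * u K d (q, 1) - u K d (p, 1) * u K d (q, 0)

/-- `β_{pq} = v_{2p-1} v_{2q} - v_{2p} v_{2q-1}`. -/
noncomputable def β (p q : Fin d) : S K d :=
  v K d (p, 0) * v K d (q, 1) - v K d (p, 1) * v K d (q, 0)

/-- `γ_{pq} = u_{2p-1} v_{2q} - u_{2p} v_{2q-1}`. -/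
noncomputable def γ (p q : Fin d) : S K d :=
  u K d (p, 0) * v K d (q, 1) - u K d (p, 1) * v K d (q, 0)

/-- The open interval (with integer endpoints, recorded as the pair of its endpoints)
`(p, q)` on the real line associated to the factor `α_{pq}` (indices are `1`-based). -/
def αInt (pq : Fin d × Fin d) : ℕ × ℕ := (pq.1.val + 1, pq.2.val + 1)

/-- The open interval `(p + d, q + d)` associated to the factor `β_{pq}`. -/
def βInt (pq : Fin d × Fin d) : ℕ × ℕ := (pq.1.val + 1 + d, pq.2.val + 1 + d)

/-- The open interval `(p, q + d)` associated to the factor `γ_{pq}`. -/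
def γInt (pq : Fin d × Fin d) : ℕ × ℕ := (pq.1.val + 1, pq.2.val + 1 + d)

/-- The point `j` associated to the factor `u_{2j-1}`. -/
def uPt (j : Fin d) : ℕ := j.val + 1

/-- The point `i + d` associated to the factor `v_{2i-1}`. -/
def vPt (i : Fin d) : ℕ := i.val + 1 + d

/-- The open intervals `(I.1, I.2)` and `(J.1, J.2)` have nonempty intersection. -/
def Meets (I J : ℕ × ℕ) : Prop := max I.1 J.1 < min I.2 J.2

/-- The open interval `(I.1, I.2)` is contained in the open interval `(J.1, J.2)`. -/
def Inside (I J : ℕ × ℕ) : Prop := J.1 ≤ I.1 ∧ I.2 ≤ J.2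

/-- Two factors *intersect* if the corresponding open intervals have nonempty
intersection and neither is contained in the other. -/
def Intersects (I J : ℕ × ℕ) : Prop := Meets I J ∧ ¬ Inside I J ∧ ¬ Inside J I

/-- A factor *covers* a point `p` if its open interval contains `p`. -/
def Covers (I : ℕ × ℕ) (p : ℕ) : Prop := I.1 < p ∧ p < I.2

/-- The admissible index data: multisets of indices for the factors
`v_{2i-1}`, `β_{pq}`, `γ_{p'q'}`, `α_{p''q''}`, `u_{2j-1}` (using multisets fixes once and
for all the order of the pairs of indices in each group), such that among the `β`-, `γ`-
and `α`-factors no two intersect and no factor covers any of the `v`- or `u`-points. -/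
structure Datum (d : ℕ) where
  vs : Multiset (Fin d)
  betas : Multiset (Fin d × Fin d)
  gammas : Multiset (Fin d × Fin d)
  alphas : Multiset (Fin d × Fin d)
  us : Multiset (Fin d)
  betas_lt : ∀ pq ∈ betas, pq.1 < pq.2
  alphas_lt : ∀ pq ∈ alphas, pq.1 < pq.2
  no_intersect : ∀ I ∈ betas.map (βInt d) + gammas.map (γInt d) + alphas.map (αInt d),
    ∀ J ∈ betas.map (βInt d) + gammas.map (γInt d) + alphas.map (αInt d),
      ¬ Intersects I J
  no_cover : ∀ I ∈ betas.map (βInt d) + gammas.map (γInt d) + alphas.map (αInt d),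
    ∀ p ∈ vs.map (vPt d) + us.map (uPt d), ¬ Covers I p

/-- The product
`v_{2i_1-1} ⋯ v_{2i_m-1} · β_{p_1q_1} ⋯ β_{p_rq_r} · γ_{p'_1q'_1} ⋯ γ_{p'_sq'_s} ·
α_{p''_1q''_1} ⋯ α_{p''_tq''_t} · u_{2j_1-1} ⋯ u_{2j_n-1}` associated to a datum. -/
noncomputable def Datum.toElem (t : Datum d) : S K d :=
  (t.vs.map fun i => v K d (i, 0)).prod *
    (t.betas.map fun pq => β K d pq.1 pq.2).prod *
    (t.gammas.map fun pq => γ K d pq.1 pq.2).prod *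
    (t.alphas.map fun pq => α K d pq.1 pq.2).prod *
    (t.us.map fun j => u K d (j, 0)).prod

section Comb

variable {ι : Type*} [LinearOrder ι]

structure Good (br : Multiset (ι × ι)) (us : Multiset ι) : Prop where
  lt : ∀ p ∈ br, p.1 < p.2
  nc : ∀ p ∈ br, ∀ q ∈ br, ¬ (p.1 < q.1 ∧ q.1 < p.2 ∧ p.2 < q.2)
  ncov : ∀ p ∈ br, ∀ c ∈ us, ¬ (p.1 < c ∧ c < p.2)

lemma Good.mono {br br' : Multiset (ι × ι)} {us : Multiset ι} (h : Good br us)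
    (hs : br' ⊆ br) : Good br' us :=
  ⟨fun p hp => h.lt p (hs hp), fun p hp q hq => h.nc p (hs hp) q (hs hq),
    fun p hp => h.ncov p (hs hp)⟩

lemma exists_min_mem (B : Multiset ι) (hB : B ≠ 0) : ∃ b ∈ B, ∀ c ∈ B, b ≤ c := by
  have hne : B.toFinset.Nonempty := by
    obtain ⟨x, hx⟩ := Multiset.exists_mem_of_ne_zero hB
    exact ⟨x, by simpa using hx⟩
  refine ⟨B.toFinset.min' hne, by simpa using B.toFinset.min'_mem hne, fun c hc => ?_⟩
  exact Finset.min'_le _ _ (by simpa using hc)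

lemma exists_max_mem (B : Multiset ι) (hB : B ≠ 0) : ∃ b ∈ B, ∀ c ∈ B, c ≤ b := by
  have hne : B.toFinset.Nonempty := by
    obtain ⟨x, hx⟩ := Multiset.exists_mem_of_ne_zero hB
    exact ⟨x, by simpa using hx⟩
  refine ⟨B.toFinset.max' hne, by simpa using B.toFinset.max'_mem hne, fun c hc => ?_⟩
  exact Finset.le_max' _ _ (by simpa using hc)

lemma Good.mem_of {br : Multiset (ι × ι)} {us : Multiset ι} (h : Good br us) {a b : ι}
    (hb : b ∈ br.map Prod.snd) (hbm : ∀ c ∈ br.map Prod.snd, b ≤ c)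
    (ha : a ∈ br.map Prod.fst + us) (hab : a < b)
    (ham : ∀ c ∈ br.map Prod.fst + us, c < b → c ≤ a) : (a, b) ∈ br := by
  obtain ⟨⟨a', b'⟩, hp, rfl⟩ := Multiset.mem_map.1 hb
  simp only at *
  have h1 : a' ≤ a := ham a' (Multiset.mem_add.2 (Or.inl (Multiset.mem_map.2 ⟨_, hp, rfl⟩)))
    (h.lt _ hp)
  rcases h1.eq_or_lt with rfl | h1
  · exact hp
  rcases Multiset.mem_add.1 ha with ha | ha
  · obtain ⟨⟨a2, c⟩, hq, rfl⟩ := Multiset.mem_map.1 ha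
    have h2 : b' ≤ c := hbm c (Multiset.mem_map.2 ⟨_, hq, rfl⟩)
    rcases h2.eq_or_lt with rfl | h2
    · exact hq
    · exact absurd ⟨h1, hab, h2⟩ (h.nc _ hp _ hq)
  · exact absurd ⟨h1, hab⟩ (h.ncov _ hp _ ha)

lemma good_unique (n : ℕ) : ∀ (br br' : Multiset (ι × ι)) (us us' : Multiset ι),
    Multiset.card br = n → Good br us → Good br' us' →
    br.map Prod.fst + us = br'.map Prod.fst + us' →
    br.map Prod.snd = br'.map Prod.snd → br = br' ∧ us = us' := by
  induction n with
  | zero =>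
    intro br br' us us' hc h h' hA hB
    have h0 : br = 0 := Multiset.card_eq_zero.1 hc
    subst h0
    have h1 : br' = 0 := by
      have := congrArg Multiset.card hB
      simp at this
      exact Multiset.card_eq_zero.1 this.symm
    subst h1
    simpa using hA
  | succ n ih =>
    intro br br' us us' hc h h' hA hB
    have hB0 : br.map Prod.snd ≠ 0 := by
      intro h0
      have := congrArg Multiset.card h0
      simp [hc] at this
    obtain ⟨b, hb, hbm⟩ := exists_min_mem _ hB0
    obtain ⟨⟨a0, b0⟩, hp, hpb⟩ := Multiset.mem_map.1 hb
    simp only at hpb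
    subst hpb
    have hne : (br.map Prod.fst + us).filter (· < b0) ≠ 0 := by
      intro h0
      have : a0 ∈ (br.map Prod.fst + us).filter (· < b0) := by
        rw [Multiset.mem_filter]
        exact ⟨Multiset.mem_add.2 (Or.inl (Multiset.mem_map.2 ⟨_, hp, rfl⟩)), h.lt _ hp⟩
      simp [h0] at this
    obtain ⟨a, ha, ham⟩ := exists_max_mem _ hne
    rw [Multiset.mem_filter] at ha
    have ham' : ∀ c ∈ br.map Prod.fst + us, c < b0 → c ≤ a := fun c hc hcb =>
      ham c (Multiset.mem_filter.2 ⟨hc, hcb⟩)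
    have m1 := h.mem_of hb hbm ha.1 ha.2 ham'
    have m2 := h'.mem_of (hB ▸ hb) (hB ▸ hbm) (hA ▸ ha.1) ha.2 (hA ▸ ham')
    obtain ⟨s, rfl⟩ := Multiset.exists_cons_of_mem m1
    obtain ⟨s', rfl⟩ := Multiset.exists_cons_of_mem m2
    have := ih s s' us us' (by simpa using hc) (h.mono (Multiset.subset_cons _ _))
      (h'.mono (Multiset.subset_cons _ _)) (by simpa using hA) (by simpa using hB)
    exact ⟨by rw [this.1], this.2⟩

lemma good_exists (n : ℕ) : ∀ (A B : Multiset ι), Multiset.card B = n →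
    (∀ b, B.countP (· ≤ b) ≤ A.countP (· < b)) →
    ∃ br us, Good br us ∧ br.map Prod.fst + us = A ∧ br.map Prod.snd = B := by
  induction n with
  | zero =>
    intro A B hc _
    have h0 : B = 0 := Multiset.card_eq_zero.1 hc
    subst h0
    exact ⟨0, A, ⟨by simp, by simp, by simp⟩, by simp, by simp⟩
  | succ n ih =>
    intro A B hc hbal
    have hB0 : B ≠ 0 := by
      rintro rfl
      simp at hc
    obtain ⟨b, hb, hbm⟩ := exists_min_mem _ hB0
    have hne : A.filter (· < b) ≠ 0 := by
      intro h0
      have h1 := hbal b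
      rw [Multiset.countP_eq_card_filter (· < b), h0, Multiset.card_zero, Nat.le_zero,
        Multiset.countP_eq_zero] at h1
      exact h1 b hb le_rfl
    obtain ⟨a, ha, ham⟩ := exists_max_mem _ hne
    rw [Multiset.mem_filter] at ha
    have ham' : ∀ c ∈ A, c < b → c ≤ a := fun c hc hcb =>
      ham c (Multiset.mem_filter.2 ⟨hc, hcb⟩)
    obtain ⟨haA, hab⟩ := ha
    obtain ⟨A', rfl⟩ := Multiset.exists_cons_of_mem haA
    obtain ⟨B', rfl⟩ := Multiset.exists_cons_of_mem hb
    obtain ⟨br, us, hg, hA, hB⟩ := ih A' B' (by simpa using hc) (by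
      intro c
      have h1 := hbal c
      by_cases hbc : b ≤ c
      · rw [Multiset.countP_cons_of_pos (p := (· ≤ c)) _ hbc,
          Multiset.countP_cons_of_pos (p := (· < c)) _ (hab.trans_le hbc)] at h1
        omega
      · have : B'.countP (· ≤ c) = 0 := by
          rw [Multiset.countP_eq_zero]
          intro e he hec
          exact hbc ((hbm e (Multiset.mem_cons_of_mem he)).trans hec)
        omega)
    have hfst : ∀ q ∈ br, q.1 < b → q.1 ≤ a := fun q hq =>
      ham' _ (Multiset.mem_cons_of_mem (hA ▸ Multiset.mem_add.2
        (Or.inl (Multiset.mem_map.2 ⟨q, hq, rfl⟩))))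
    have hsnd : ∀ q ∈ br, b ≤ q.2 := fun q hq =>
      hbm _ (Multiset.mem_cons_of_mem (hB ▸ Multiset.mem_map.2 ⟨q, hq, rfl⟩))
    refine ⟨(a, b) ::ₘ br, us, ⟨?_, ?_, ?_⟩, by simp [hA], by simp [hB]⟩
    · intro p hp
      rcases Multiset.mem_cons.1 hp with rfl | hp
      · exact hab
      · exact hg.lt p hp
    · rintro p hp q hq ⟨h1, h2, h3⟩
      rcases Multiset.mem_cons.1 hp with rfl | hp
      · rcases Multiset.mem_cons.1 hq with rfl | hq
        · exact lt_irrefl _ h1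
        · exact absurd (hfst q hq h2) (not_le.2 h1)
      · rcases Multiset.mem_cons.1 hq with rfl | hq
        · exact absurd (hsnd p hp) (not_le.2 h3)
        · exact hg.nc p hp q hq ⟨h1, h2, h3⟩
    · rintro p hp c hc ⟨h1, h2⟩
      rcases Multiset.mem_cons.1 hp with rfl | hp
      · exact absurd (ham' c (Multiset.mem_cons_of_mem (hA ▸ Multiset.mem_add.2 (Or.inr hc))) h2)
          (not_le.2 h1)
      · exact hg.ncov p hp c hc ⟨h1, h2⟩

end Comb
section SL2

/-- commutation of powers in an `sl2`-type situation, on weight vectors -/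
lemma sl2_pow {k M : Type*} [Field k] [AddCommGroup M] [Module k M]
    (e f h : Module.End k M) (hef : e * f - f * e = h) (hhe : h * e - e * h = (2 : k) • e)
    (μ : k) (x : M) (hx : h x = μ • x) (n : ℕ) :
    (e ^ (n + 1)) (f x) = f ((e ^ (n + 1)) x) + (((n : k) + 1) * (μ + n)) • (e ^ n) x ∧
      h ((e ^ n) x) = (μ + 2 * n) • (e ^ n) x := by
  have ef : ∀ y, e (f y) = f (e y) + h y := fun y => by
    rw [← hef]; simp
  have he : ∀ y, h (e y) = e (h y) + (2 : k) • e y := fun y => by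
    have := LinearMap.congr_fun hhe y
    simp at this
    rw [← this]; abel
  induction n with
  | zero => simp [ef, hx]
  | succ n ih =>
    obtain ⟨ih1, ih2⟩ := ih
    have hw : h ((e ^ (n + 1)) x) = (μ + 2 * ((n + 1 : ℕ) : k)) • (e ^ (n + 1)) x := by
      rw [pow_succ', Module.End.mul_apply, he, ih2, map_smul]
      rw [← add_smul]; congr 1; push_cast; ring
    refine ⟨?_, hw⟩
    rw [pow_succ' e (n + 1), Module.End.mul_apply, ih1, map_add, ef, hw, map_smul,
      Module.End.mul_apply, pow_succ' e n, Module.End.mul_apply, add_assoc, ← add_smul]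
    congr 2
    push_cast; ring

lemma sl2_main {k M : Type*} [Field k] [CharZero k] [AddCommGroup M] [Module k M]
    (e f h : Module.End k M) (hef : e * f - f * e = h) (hhe : h * e - e * h = (2 : k) • e)
    (hhf : h * f - f * h = -(2 : k) • f) (m : ℕ) :
    ∀ (s a b : ℕ) (x : M), a + b = s → a ≤ m → h x = (-(m : k)) • x →
      (e ^ a) x = 0 → (f ^ b) x = 0 → x = 0 := by
  have ef : ∀ y, e (f y) = f (e y) + h y := fun y => by
    rw [← hef]; simp
  have he : ∀ y, h (e y) = e (h y) + (2 : k) • e y := fun y => by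
    have := LinearMap.congr_fun hhe y
    simp at this
    rw [← this]; abel
  have hf : ∀ y, h (f y) = f (h y) - (2 : k) • f y := fun y => by
    have := LinearMap.congr_fun hhf y
    simp at this
    rw [sub_eq_add_neg, ← this]; abel
  intro s
  induction s with
  | zero =>
    intro a b x hab _ _ ha _
    have : a = 0 := by omega
    subst this
    simpa using ha
  | succ s ih =>
    intro a b x hab ham hx ha hb
    rcases a with _ | a
    · simpa using ha
    rcases b with _ | b
    · simpa using hb
    -- weight of f e x
    have hfe : h (f (e x)) = (-(m : k)) • f (e x) := by
      rw [hf, he, hx, map_add, map_smul, map_smul, map_smul]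
      module
    have hef' : h (e (f x)) = (-(m : k)) • e (f x) := by
      rw [he, hf, hx, map_sub, map_smul, map_smul, map_smul]
      module
    -- first Casimir relation
    have hex : h (e x) = (-(m : k) + 2) • e x := by
      rw [he, hx, map_smul]; module
    have hfx : h (f x) = (-(m : k) - 2) • f x := by
      rw [hf, hx, map_smul]; module
    have c1 : ∃ c : k, c = (a : k) * ((-(m : k)) + 2 + a - 1) ∧ f (e x) = c • x := by
      refine ⟨_, rfl, ?_⟩
      rw [← sub_eq_zero]
      apply ih a (b + 1) _ (by omega) (by omega)
      · rw [map_sub, hfe, map_smul, hx]; module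
      · rcases a with _ | a
        · simp at ha
          simp [ha]
        · rw [map_sub, (sl2_pow e f h hef hhe _ _ hex a).1, map_smul]
          have : (e ^ (a + 1)) (e x) = 0 := by
            rw [← Module.End.mul_apply, ← pow_succ]; exact ha
          rw [this, map_zero, zero_add, ← Module.End.mul_apply, ← pow_succ, ← sub_smul]
          push_cast
          rw [show ((a : k) + 1) * (-(m : k) + 2 + a) - ((a : k) + 1) * (-(m : k) + 2 + (a + 1) - 1)
            = 0 by ring, zero_smul]
      · have key := (sl2_pow f e (-h) (by rw [← hef]; abel)
          (by rw [neg_mul, mul_neg, sub_neg_eq_add, neg_add_eq_sub, ← neg_sub, hhf]; simp)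
          (m : k) x (by simp [hx]) b).1
        rw [map_sub, map_smul, hb, smul_zero, sub_zero, ← Module.End.mul_apply, ← pow_succ,
          pow_succ', Module.End.mul_apply, key, hb, map_zero, zero_add, map_smul,
          ← Module.End.mul_apply, ← pow_succ', hb, smul_zero]
    have c2 : ∃ c : k, c = (b : k) * ((m : k) + 2 + b - 1) ∧ e (f x) = c • x := by
      refine ⟨_, rfl, ?_⟩
      rw [← sub_eq_zero]
      apply ih (a + 1) b _ (by omega) (by omega)
      · rw [map_sub, hef', map_smul, hx]; module
      · have key := (sl2_pow e f h hef hhe _ x hx a).1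
        rw [map_sub, map_smul, ha, smul_zero, sub_zero, ← Module.End.mul_apply, ← pow_succ,
          pow_succ', Module.End.mul_apply, key, ha, map_zero, zero_add, map_smul,
          ← Module.End.mul_apply, ← pow_succ', ha, smul_zero]
      · rcases b with _ | b
        · simp at hb
          simp [hb]
        · have key := (sl2_pow f e (-h) (by rw [← hef]; abel)
            (by rw [neg_mul, mul_neg, sub_neg_eq_add, neg_add_eq_sub, ← neg_sub, hhf]; simp)
            ((m : k) + 2) (f x) (by rw [LinearMap.neg_apply, hfx]; module) b).1
          rw [map_sub, key, map_smul]
          have : (f ^ (b + 1)) (f x) = 0 := by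
            rw [← Module.End.mul_apply, ← pow_succ]; exact hb
          rw [this, map_zero, zero_add, ← Module.End.mul_apply, ← pow_succ, ← sub_smul]
          push_cast
          rw [show ((b : k) + 1) * ((m : k) + 2 + b) - ((b : k) + 1) * ((m : k) + 2 + (b + 1) - 1)
            = 0 by ring, zero_smul]
    obtain ⟨c, hc, h1⟩ := c1
    obtain ⟨c', hc', h2⟩ := c2
    have h3 := ef x
    rw [h1, h2, hx, ← add_smul, ← sub_eq_zero, ← sub_smul, smul_eq_zero] at h3
    rcases h3 with h3 | h3
    · exfalso
      rw [hc, hc'] at h3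
      obtain ⟨r, rfl⟩ : ∃ r, m = a + 1 + r := ⟨m - (a + 1), by omega⟩
      have h4 : (((b * (a + 1 + r + 1 + b) + a * r + (a + 1 + r) : ℕ)) : k) = 0 := by
        rw [← h3]; push_cast; ring
      rw [Nat.cast_eq_zero] at h4
      have : 0 < b * (a + 1 + r + 1 + b) + a * r + (a + 1 + r) := by positivity
      omega
    · exact h3

end SL2
set_option linter.unusedSectionVars false
set_option linter.unusedSimpArgs false
section Alg

open OrderDual

/-- variables, ordered so that `y`-variables with large index come first -/
abbrev V (ι : Type*) := ιᵒᵈ ⊕ₗ ι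

def yv {ι : Type*} (a : ι) : V ι := toLex (Sum.inl (toDual a))
def xv {ι : Type*} (a : ι) : V ι := toLex (Sum.inr a)

lemma V_cases {ι : Type*} (i : V ι) : (∃ a, i = yv a) ∨ ∃ a, i = xv a := by
  rcases i with a | a
  · exact Or.inl ⟨ofDual a, rfl⟩
  · exact Or.inr ⟨a, rfl⟩

@[simp] lemma yv_inj {ι : Type*} {a b : ι} : yv a = yv b ↔ a = b := by
  simp [yv]
@[simp] lemma xv_inj {ι : Type*} {a b : ι} : xv a = xv b ↔ a = b := by
  simp [xv]
@[simp] lemma xv_ne_yv {ι : Type*} {a b : ι} : xv a ≠ yv b := by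
  simp [xv, yv]
@[simp] lemma yv_ne_xv {ι : Type*} {a b : ι} : yv a ≠ xv b := by
  simp [xv, yv]

variable {ι : Type*} [LinearOrder ι]

lemma yv_lt_yv {a b : ι} : yv a < yv b ↔ b < a := by
  simp [yv]
lemma not_xv_lt_yv {a b : ι} : ¬ xv a < yv b := by
  simp [xv, yv]

variable {k : Type*} [Field k]

noncomputable def E (s t : V ι) : Derivation k (MvPolynomial (V ι) k) (MvPolynomial (V ι) k) :=
  (X s : MvPolynomial (V ι) k) • pderiv t

lemma E_X (s t i : V ι) : E (k := k) s t (X i) = if i = t then X s else 0 := by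
  simp only [E, Derivation.smul_apply, smul_eq_mul, pderiv_X]
  rw [Pi.single_apply]
  split_ifs <;> simp_all

lemma coeff_E (s t : V ι) (f : MvPolynomial (V ι) k) (m : V ι →₀ ℕ) :
    coeff m (E s t f) = if m s ≠ 0 then
      (((m - Finsupp.single s 1 : V ι →₀ ℕ) t : k) + 1) *
        coeff (m - Finsupp.single s 1 + Finsupp.single t 1) f else 0 := by
  simp only [E, Derivation.smul_apply, smul_eq_mul, coeff_X_mul', Finsupp.mem_support_iff,
    coeff_pderiv]
  split_ifs <;> simp [mul_comm]

lemma coeff_E_self (s : V ι) (f : MvPolynomial (V ι) k) (m : V ι →₀ ℕ) :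
    coeff m (E s s f) = (m s : k) * coeff m f := by
  rw [coeff_E]
  split_ifs with h
  · have h1 : m - Finsupp.single s 1 + Finsupp.single s 1 = m := by
      apply tsub_add_cancel_of_le
      rw [Finsupp.single_le_iff]; omega
    rw [h1]
    congr 1
    have := DFunLike.congr_fun h1 s
    simp only [Finsupp.add_apply, Finsupp.single_eq_same] at this
    rw [← this]
    push_cast
    rfl
  · simp at h; simp [h]

noncomputable def eJ (J : Finset ι) :
    Derivation k (MvPolynomial (V ι) k) (MvPolynomial (V ι) k) := ∑ j ∈ J, E (xv j) (yv j)
noncomputable def fJ (J : Finset ι) :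
    Derivation k (MvPolynomial (V ι) k) (MvPolynomial (V ι) k) := ∑ j ∈ J, E (yv j) (xv j)
noncomputable def hJ (J : Finset ι) :
    Derivation k (MvPolynomial (V ι) k) (MvPolynomial (V ι) k) :=
  ∑ j ∈ J, (E (xv j) (xv j) - E (yv j) (yv j))

lemma sum_deriv_apply {α : Type*} (J : Finset α)
    (D : α → Derivation k (MvPolynomial (V ι) k) (MvPolynomial (V ι) k))
    (f : MvPolynomial (V ι) k) : (∑ j ∈ J, D j) f = ∑ j ∈ J, D j f := by
  classical
  induction J using Finset.induction_on with
  | empty => simp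
  | insert a s ha ih => simp [Finset.sum_insert ha, ih]

lemma eJ_y (J : Finset ι) (a : ι) :
    eJ (k := k) J (X (yv a)) = if a ∈ J then X (xv a) else 0 := by
  simp [eJ, sum_deriv_apply, E_X]
lemma eJ_x (J : Finset ι) (a : ι) : eJ (k := k) J (X (xv a)) = 0 := by
  simp [eJ, sum_deriv_apply, E_X]
lemma fJ_x (J : Finset ι) (a : ι) :
    fJ (k := k) J (X (xv a)) = if a ∈ J then X (yv a) else 0 := by
  simp [fJ, sum_deriv_apply, E_X]
lemma fJ_y (J : Finset ι) (a : ι) : fJ (k := k) J (X (yv a)) = 0 := by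
  simp [fJ, sum_deriv_apply, E_X]
lemma hJ_x (J : Finset ι) (a : ι) :
    hJ (k := k) J (X (xv a)) = if a ∈ J then X (xv a) else 0 := by
  simp [hJ, sum_deriv_apply, E_X]
lemma hJ_y (J : Finset ι) (a : ι) :
    hJ (k := k) J (X (yv a)) = if a ∈ J then - X (yv a) else 0 := by
  simp only [hJ, sum_deriv_apply, Derivation.sub_apply, E_X, yv_inj, yv_ne_xv, if_false, zero_sub]
  rw [Finset.sum_neg_distrib]
  split_ifs with h <;> simp [h]

lemma lie_to_end (D1 D2 D3 : Derivation k (MvPolynomial (V ι) k) (MvPolynomial (V ι) k))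
    (h : ∀ i, D1 (D2 (X i)) - D2 (D1 (X i)) = D3 (X i)) :
    (D1 : Module.End k (MvPolynomial (V ι) k)) * (D2 : Module.End k (MvPolynomial (V ι) k)) -
      (D2 : Module.End k (MvPolynomial (V ι) k)) * (D1 : Module.End k (MvPolynomial (V ι) k))
      = (D3 : Module.End k (MvPolynomial (V ι) k)) := by
  have : ⁅D1, D2⁆ = D3 := by
    apply MvPolynomial.derivation_ext
    intro i
    rw [Derivation.commutator_apply, h]
  rw [← this, Derivation.commutator_coe_linear_map, Ring.lie_def]

lemma comm_ef (J : Finset ι) :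
    (eJ (k := k) J : Module.End k (MvPolynomial (V ι) k)) * (fJ (k := k) J : Module.End k (MvPolynomial (V ι) k)) -
      (fJ (k := k) J : Module.End k (MvPolynomial (V ι) k)) * (eJ (k := k) J : Module.End k (MvPolynomial (V ι) k))
      = (hJ (k := k) J : Module.End k (MvPolynomial (V ι) k)) := by
  apply lie_to_end
  intro i
  rcases V_cases i with ⟨a, rfl⟩ | ⟨a, rfl⟩ <;> by_cases h : a ∈ J <;>
    simp [eJ_x, eJ_y, fJ_x, fJ_y, hJ_x, hJ_y, h]

lemma comm_he (J : Finset ι) :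
    (hJ (k := k) J : Module.End k (MvPolynomial (V ι) k)) * (eJ (k := k) J : Module.End k (MvPolynomial (V ι) k)) -
      (eJ (k := k) J : Module.End k (MvPolynomial (V ι) k)) * (hJ (k := k) J : Module.End k (MvPolynomial (V ι) k))
      = (2 : k) • (eJ (k := k) J : Module.End k (MvPolynomial (V ι) k)) := by
  have := lie_to_end (hJ J) (eJ J) ((2 : k) • eJ (k := k) J) (by
    intro i
    rcases V_cases i with ⟨a, rfl⟩ | ⟨a, rfl⟩ <;> by_cases h : a ∈ J <;>
      simp [eJ_x, eJ_y, hJ_x, hJ_y, h]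
    module)
  rw [this]; rfl

lemma comm_hf (J : Finset ι) :
    (hJ (k := k) J : Module.End k (MvPolynomial (V ι) k)) * (fJ (k := k) J : Module.End k (MvPolynomial (V ι) k)) -
      (fJ (k := k) J : Module.End k (MvPolynomial (V ι) k)) * (hJ (k := k) J : Module.End k (MvPolynomial (V ι) k))
      = -(2 : k) • (fJ (k := k) J : Module.End k (MvPolynomial (V ι) k)) := by
  have := lie_to_end (hJ J) (fJ J) (-(2 : k) • fJ (k := k) J) (by
    intro i
    rcases V_cases i with ⟨a, rfl⟩ | ⟨a, rfl⟩ <;> by_cases h : a ∈ J <;>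
      simp [fJ_x, fJ_y, hJ_x, hJ_y, h]
    module)
  rw [this]; rfl

lemma comm_eE (J : Finset ι) (b : ι) (hb : b ∉ J) (f : MvPolynomial (V ι) k) :
    eJ J (E (xv b) (yv b) f) = E (xv b) (yv b) (eJ J f) := by
  have := lie_to_end (eJ J) (E (k := k) (xv b) (yv b)) 0 (by
    intro i
    rcases V_cases i with ⟨a, rfl⟩ | ⟨a, rfl⟩
    · by_cases h' : a = b
      · subst h'
        simp [eJ_x, eJ_y, E_X, hb]
      · by_cases h : a ∈ J <;> simp [eJ_x, eJ_y, E_X, h, h']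
    · simp [eJ_x, E_X])
  have := LinearMap.congr_fun this f
  simpa [sub_eq_zero] using this

lemma coeff_hJ (J : Finset ι) (f : MvPolynomial (V ι) k) (m : V ι →₀ ℕ) :
    coeff m (hJ J f) = (((∑ j ∈ J, m (xv j) : ℕ) : k) - ((∑ j ∈ J, m (yv j) : ℕ) : k))
      * coeff m f := by
  simp only [hJ, sum_deriv_apply, coeff_sum, Derivation.sub_apply, coeff_sub, coeff_E_self]
  push_cast
  rw [Finset.sum_sub_distrib, sub_mul, Finset.sum_mul, Finset.sum_mul]

noncomputable def pr (Q : (V ι →₀ ℕ) → Prop) (f : MvPolynomial (V ι) k) : MvPolynomial (V ι) k :=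
  open Classical in ∑ m ∈ f.support with Q m, monomial m (coeff m f)

open Classical in
lemma coeff_pr (Q : (V ι →₀ ℕ) → Prop) (f : MvPolynomial (V ι) k) (m : V ι →₀ ℕ) :
    coeff m (pr Q f) = if Q m then coeff m f else 0 := by
  simp only [pr, coeff_sum, coeff_monomial, Finset.sum_ite_eq', Finset.mem_filter,
    mem_support_iff]
  split_ifs <;> simp_all

/-- move one `x_j` to `y_j` -/
noncomputable def mv (j : ι) (m : V ι →₀ ℕ) : V ι →₀ ℕ :=
  m - Finsupp.single (xv j) 1 + Finsupp.single (yv j) 1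

lemma mv_x (i j : ι) (m : V ι →₀ ℕ) : mv j m (xv i) = if i = j then m (xv i) - 1 else m (xv i) := by
  by_cases h : i = j
  · subst h; simp [mv]
  · have : ¬ j = i := fun h' => h h'.symm
    simp [mv, Finsupp.single_apply, h, this]

lemma mv_y (i j : ι) (m : V ι →₀ ℕ) : mv j m (yv i) = if i = j then m (yv i) + 1 else m (yv i) := by
  by_cases h : i = j
  · subst h; simp [mv]
  · have : ¬ j = i := fun h' => h h'.symm
    simp [mv, Finsupp.single_apply, h, this]

lemma coeff_Exy (j : ι) (f : MvPolynomial (V ι) k) (m : V ι →₀ ℕ) :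
    coeff m (E (xv j) (yv j) f) = if m (xv j) ≠ 0 then
      ((m (yv j) : k) + 1) * coeff (mv j m) f else 0 := by
  rw [coeff_E]
  simp [mv]

lemma sum_mv_x (J : Finset ι) (j : ι) (m : V ι →₀ ℕ) (hm : m (xv j) ≠ 0) (hj : j ∈ J) :
    ∑ i ∈ J, mv j m (xv i) + 1 = ∑ i ∈ J, m (xv i) := by
  rw [← Finset.add_sum_erase _ _ hj, ← Finset.add_sum_erase _ _ hj, mv_x, if_pos rfl,
    Finset.sum_congr rfl (g := fun i => m (xv i)) (fun i hi => by
      rw [mv_x, if_neg (Finset.ne_of_mem_erase hi)])]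
  omega

lemma sum_mv_y (J : Finset ι) (j : ι) (m : V ι →₀ ℕ) (hj : j ∈ J) :
    ∑ i ∈ J, mv j m (yv i) = ∑ i ∈ J, m (yv i) + 1 := by
  rw [← Finset.add_sum_erase _ _ hj, ← Finset.add_sum_erase _ _ hj, mv_y, if_pos rfl,
    Finset.sum_congr rfl (g := fun i => m (yv i)) (fun i hi => by
      rw [mv_y, if_neg (Finset.ne_of_mem_erase hi)])]
  omega

lemma sum_mv_x' (J : Finset ι) (j : ι) (m : V ι →₀ ℕ) (hj : j ∉ J) :
    ∑ i ∈ J, mv j m (xv i) = ∑ i ∈ J, m (xv i) :=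
  Finset.sum_congr rfl fun i hi => by
    rw [mv_x, if_neg]; rintro rfl; exact hj hi

lemma sum_mv_y' (J : Finset ι) (j : ι) (m : V ι →₀ ℕ) (hj : j ∉ J) :
    ∑ i ∈ J, mv j m (yv i) = ∑ i ∈ J, m (yv i) :=
  Finset.sum_congr rfl fun i hi => by
    rw [mv_y, if_neg]; rintro rfl; exact hj hi

/-- the lowering operator is locally nilpotent -/
lemma fJ_nil (J : Finset ι) (p : ℕ) : ∀ f : MvPolynomial (V ι) k,
    (∀ m, coeff m f ≠ 0 → ∑ j ∈ J, m (xv j) ≤ p) →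
    ((fJ (k := k) J : Module.End k (MvPolynomial (V ι) k)) ^ (p + 1)) f = 0 := by
  have key : ∀ (f : MvPolynomial (V ι) k) (m : V ι →₀ ℕ), coeff m (fJ J f) ≠ 0 →
      ∃ m', coeff m' f ≠ 0 ∧ ∑ j ∈ J, m' (xv j) = ∑ j ∈ J, m (xv j) + 1 := by
    intro f m hm
    simp only [fJ, sum_deriv_apply, coeff_sum] at hm
    obtain ⟨j, hj, hne⟩ := Finset.exists_ne_zero_of_sum_ne_zero hm
    rw [coeff_E] at hne
    split_ifs at hne with h
    · refine ⟨_, right_ne_zero_of_mul hne, ?_⟩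
      simp only [Finsupp.add_apply, Finsupp.tsub_apply, Finset.sum_add_distrib]
      congr 1
      · simp [Finsupp.single_apply]
      · simp [Finsupp.single_apply, hj]
    · exact absurd rfl hne
  induction p with
  | zero =>
    intro f hf
    rw [zero_add, pow_one]
    ext m
    rw [coeff_zero]
    by_contra h
    obtain ⟨m', h1, h2⟩ := key f m h
    have := hf m' h1
    omega
  | succ p ih =>
    intro f hf
    rw [pow_succ, Module.End.mul_apply]
    apply ih
    intro m hm
    obtain ⟨m', h1, h2⟩ := key f m hm
    have := hf m' h1
    omega


lemma ballot_of_ker [Fintype ι] [CharZero k] (f : MvPolynomial (V ι) k)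
    (hf : eJ Finset.univ f = 0)
    (m₀ : V ι →₀ ℕ) (hm₀ : coeff m₀ f ≠ 0)
    (hlead : ∀ m, coeff m f ≠ 0 → ∀ b : ι, (∀ j, b < j → m (yv j) = m₀ (yv j)) →
      m (yv b) ≤ m₀ (yv b)) (b : ι) :
    ∑ j with j ≤ b, m₀ (yv j) ≤ ∑ j with j < b, m₀ (xv j) := by
  classical
  set J : Finset ι := Finset.univ.filter (· < b) with hJdef
  have hbJ : b ∉ J := by simp [hJdef]
  have hsum : ∑ j with j ≤ b, m₀ (yv j) = m₀ (yv b) + ∑ j ∈ J, m₀ (yv j) := by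
    rw [← Finset.sum_insert (f := fun j => m₀ (yv j)) hbJ]
    apply Finset.sum_congr _ (fun _ _ => rfl)
    ext j
    simp [hJdef, le_iff_eq_or_lt]
  rw [hsum]
  by_contra! hcon
  set K₀ := m₀ (yv b) with hK₀
  set AX := ∑ j ∈ J, m₀ (xv j) with hAX
  set BY := ∑ j ∈ J, m₀ (yv j) with hBY
  set n := m₀ (xv b) + m₀ (yv b) with hn
  let Q : ℕ → (V ι →₀ ℕ) → Prop := fun c m =>
    (∀ j, b < j → m (xv j) = m₀ (xv j) ∧ m (yv j) = m₀ (yv j)) ∧ m (yv b) = c ∧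
      m (xv b) + c = n ∧ ∑ j ∈ J, m (xv j) + K₀ = AX + c ∧ ∑ j ∈ J, m (yv j) + c = BY + K₀
  let Q' : ℕ → (V ι →₀ ℕ) → Prop := fun c m =>
    (∀ j, b < j → m (xv j) = m₀ (xv j) ∧ m (yv j) = m₀ (yv j)) ∧ m (yv b) = c ∧
      m (xv b) + c = n ∧ ∑ j ∈ J, m (xv j) + K₀ = AX + c + 1 ∧
      ∑ j ∈ J, m (yv j) + c + 1 = BY + K₀
  have hQJ : ∀ c m j, j ∈ J → m (xv j) ≠ 0 → (Q c (mv j m) ↔ Q' c m) := by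
    intro c m j hj hm
    have hjb : j < b := by simpa [hJdef] using hj
    have h1 := sum_mv_x J j m hm hj
    have h2 := sum_mv_y J j m hj
    have h3 : mv j m (yv b) = m (yv b) := by rw [mv_y, if_neg hjb.ne']
    have h4 : mv j m (xv b) = m (xv b) := by rw [mv_x, if_neg hjb.ne']
    have h5 : (∀ i, b < i → mv j m (xv i) = m₀ (xv i) ∧ mv j m (yv i) = m₀ (yv i)) ↔
        (∀ i, b < i → m (xv i) = m₀ (xv i) ∧ m (yv i) = m₀ (yv i)) := by
      refine forall_congr' fun i => forall_congr' fun hi => ?_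
      rw [mv_x, mv_y, if_neg (hjb.trans hi).ne', if_neg (hjb.trans hi).ne']
    simp only [Q, Q', h2, h3, h4, h5]
    refine and_congr_right fun _ => and_congr_right fun _ => and_congr_right fun _ => ?_
    constructor <;> rintro ⟨_, _⟩ <;> constructor <;> omega
  have hQb : ∀ c m, m (xv b) ≠ 0 → (Q (c + 1) (mv b m) ↔ Q' c m) := by
    intro c m hm
    have h1 := sum_mv_x' J b m hbJ
    have h2 := sum_mv_y' J b m hbJ
    have h3 : mv b m (yv b) = m (yv b) + 1 := by rw [mv_y, if_pos rfl]
    have h4 : mv b m (xv b) = m (xv b) - 1 := by rw [mv_x, if_pos rfl]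
    have h5 : (∀ i, b < i → mv b m (xv i) = m₀ (xv i) ∧ mv b m (yv i) = m₀ (yv i)) ↔
        (∀ i, b < i → m (xv i) = m₀ (xv i) ∧ m (yv i) = m₀ (yv i)) := by
      refine forall_congr' fun i => forall_congr' fun hi => ?_
      rw [mv_x, mv_y, if_neg hi.ne', if_neg hi.ne']
    simp only [Q, Q', h1, h2, h3, h4, h5]
    refine and_congr_right fun _ => ?_
    constructor <;> rintro ⟨_, _, _, _⟩ <;> refine ⟨?_, ?_, ?_, ?_⟩ <;> omega
  let g : ℕ → MvPolynomial (V ι) k := fun c => pr (Q c) f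
  have hrel : ∀ c, eJ J (g c) + E (xv b) (yv b) (g (c + 1)) = 0 := by
    intro c
    ext m
    have h0 : coeff m (eJ Finset.univ f) = 0 := by rw [hf]; simp
    simp only [eJ, sum_deriv_apply, coeff_sum, coeff_add, coeff_zero, coeff_Exy] at h0 ⊢
    by_cases hQ' : Q' c m
    · have hsub : Finset.univ = (insert b J) ∪ Finset.univ.filter (fun j => b < j) := by
        ext j
        simp only [hJdef, Finset.mem_univ, Finset.mem_union, Finset.mem_insert,
          Finset.mem_filter, true_and, true_iff]
        rcases lt_trichotomy j b with h | h | h <;> simp [h]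
      have hdisj : Disjoint (insert b J) (Finset.univ.filter (fun j => b < j)) := by
        rw [Finset.disjoint_left]
        intro j hj hj'
        simp only [hJdef, Finset.mem_insert, Finset.mem_filter, Finset.mem_univ, true_and] at hj hj'
        rcases hj with rfl | hj
        · exact lt_irrefl _ hj'
        · exact lt_asymm hj hj'
      rw [hsub, Finset.sum_union hdisj, Finset.sum_insert hbJ] at h0
      have hz : ∑ j with b < j, (if m (xv j) ≠ 0 then
          ((m (yv j) : k) + 1) * coeff (mv j m) f else 0) = 0 := by
        apply Finset.sum_eq_zero
        intro j hj
        have hj : b < j := by simpa using hj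
        split_ifs with hm
        · rw [mul_eq_zero]
          right
          by_contra hne
          have := hlead _ hne j (fun i hi => by
            rw [mv_y, if_neg hi.ne']; exact (hQ'.1 i (hj.trans hi)).2)
          rw [mv_y, if_pos rfl, (hQ'.1 j hj).2] at this
          omega
        · rfl
      rw [hz, add_zero, add_comm] at h0
      refine Eq.trans ?_ h0
      congr 1
      · apply Finset.sum_congr rfl
        intro j hj
        split_ifs with hm
        · rw [coeff_pr, if_pos ((hQJ c m j hj hm).2 hQ')]
        · rfl
      · split_ifs with hm
        · rw [coeff_pr, if_pos ((hQb c m hm).2 hQ')]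
        · rfl
    · have hA : ∑ j ∈ J, (if m (xv j) ≠ 0 then
          ((m (yv j) : k) + 1) * coeff (mv j m) (g c) else 0) = 0 := by
        apply Finset.sum_eq_zero
        intro j hj
        split_ifs with hm
        · rw [coeff_pr, if_neg (fun h => hQ' ((hQJ c m j hj hm).1 h)), mul_zero]
        · rfl
      rw [hA, zero_add]
      split_ifs with hm
      · rw [coeff_pr, if_neg (fun h => hQ' ((hQb c m hm).1 h)), mul_zero]
      · rfl
  have hbig : g (K₀ + 1) = 0 := by
    ext m
    rw [coeff_pr, coeff_zero]
    split_ifs with h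
    · by_contra hne
      have := hlead m hne b (fun j hj => (h.1 j hj).2)
      have := h.2.1
      omega
    · rfl
  have hrel' : ∀ c, eJ J (g c) = - E (xv b) (yv b) (g (c + 1)) := fun c =>
    eq_neg_of_add_eq_zero_left (hrel c)
  have hcomm : ∀ (r : ℕ) (p : MvPolynomial (V ι) k),
      ((eJ (k := k) J : Module.End k (MvPolynomial (V ι) k)) ^ r) (E (xv b) (yv b) p) =
      E (xv b) (yv b) (((eJ (k := k) J : Module.End k (MvPolynomial (V ι) k)) ^ r) p) := by
    intro r
    induction r with
    | zero => intro p; simp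
    | succ r ih =>
      intro p
      rw [pow_succ, Module.End.mul_apply, Module.End.mul_apply]
      have : (eJ (k := k) J : Module.End k (MvPolynomial (V ι) k)) (E (xv b) (yv b) p) =
        E (xv b) (yv b) ((eJ (k := k) J : Module.End k (MvPolynomial (V ι) k)) p) :=
        comm_eE J b hbJ p
      rw [this, ih]
  have hpow : ∀ r c, r + c = K₀ + 1 →
      ((eJ (k := k) J : Module.End k (MvPolynomial (V ι) k)) ^ r) (g c) = 0 := by
    intro r
    induction r with
    | zero =>
      intro c hc
      have : c = K₀ + 1 := by omega
      rw [this, hbig, map_zero]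
    | succ r ih =>
      intro c hc
      have h1 : (eJ (k := k) J : Module.End k (MvPolynomial (V ι) k)) (g c) =
        - E (xv b) (yv b) (g (c + 1)) := hrel' c
      rw [pow_succ, Module.End.mul_apply, h1, map_neg, hcomm, ih (c + 1) (by omega), map_zero,
        neg_zero]
  have hg0 : g 0 = 0 := by
    apply sl2_main (eJ (k := k) J : Module.End k (MvPolynomial (V ι) k))
      (fJ (k := k) J : Module.End k (MvPolynomial (V ι) k))
      (hJ (k := k) J : Module.End k (MvPolynomial (V ι) k)) (comm_ef J) (comm_he J) (comm_hf J)
      (BY + 2 * K₀ - AX) _ (K₀ + 1) (AX + 1) _ rfl (by omega)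
    · ext m
      change coeff m (hJ J (g 0)) = _
      rw [coeff_hJ, coeff_smul, coeff_pr, smul_eq_mul]
      split_ifs with h
      · congr 1
        have h1 := h.2.2.2.1
        have h2 := h.2.2.2.2
        rw [sub_eq_iff_eq_add, neg_add_eq_sub, eq_sub_iff_add_eq, ← Nat.cast_add, Nat.cast_inj]
        omega
      · simp
    · exact hpow _ _ (by omega)
    · apply fJ_nil
      intro m hm
      rw [coeff_pr] at hm
      split_ifs at hm with h
      · have := h.2.2.2.1
        omega
      · exact absurd rfl hm
  have hall : ∀ c, g c = 0 := by
    intro c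
    induction c with
    | zero => exact hg0
    | succ c ih =>
      have h1 := hrel c
      rw [ih, map_zero, zero_add] at h1
      ext m
      rw [coeff_zero]
      by_cases h : Q (c + 1) m
      · have h2 := congrArg (coeff (m - Finsupp.single (yv b) 1 + Finsupp.single (xv b) 1)) h1
        rw [coeff_Exy, coeff_zero, if_pos (by simp)] at h2
        have h3 : mv b (m - Finsupp.single (yv b) 1 + Finsupp.single (xv b) 1) = m := by
          rw [mv, add_tsub_cancel_right]
          apply tsub_add_cancel_of_le
          rw [Finsupp.single_le_iff, h.2.1]; omega
        rw [h3] at h2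
        rcases mul_eq_zero.1 h2 with h2 | h2
        · exact absurd h2 (Nat.cast_add_one_ne_zero _)
        · exact h2
      · rw [coeff_pr, if_neg h]
  have hfin : coeff m₀ (g K₀) = coeff m₀ f := by
    rw [coeff_pr, if_pos]
    exact ⟨fun _ _ => ⟨rfl, rfl⟩, rfl, rfl, rfl, rfl⟩
  rw [hall, coeff_zero] at hfin
  exact hm₀ hfin.symm

variable [Fintype ι]

noncomputable def mo : MonomialOrder (V ι) := MonomialOrder.lex

open scoped MonomialOrder

lemma mo_lt_of (m₀ m : V ι →₀ ℕ) (b : ι) (h : ∀ j, b < j → m (yv j) = m₀ (yv j))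
    (hb : m₀ (yv b) < m (yv b)) : mo.toSyn m₀ < mo.toSyn m := by
  refine MonomialOrder.lex_lt_iff.2 ?_
  refine ⟨yv b, ?_, hb⟩
  intro i hi
  rcases V_cases i with ⟨a, rfl⟩ | ⟨a, rfl⟩
  · exact (h a (yv_lt_yv.1 hi)).symm
  · exact absurd hi not_xv_lt_yv

noncomputable def bra (p : ι × ι) : MvPolynomial (V ι) k :=
  X (xv p.1) * X (yv p.2) - X (yv p.1) * X (xv p.2)

lemma bra_degree (p : ι × ι) (hp : p.1 < p.2) :
    bra (k := k) p ≠ 0 ∧ mo.degree (bra (k := k) p) =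
      Finsupp.single (xv p.1) 1 + Finsupp.single (yv p.2) 1 := by
  have h1 : mo.degree (X (xv p.1) * X (yv p.2) : MvPolynomial (V ι) k) =
      Finsupp.single (xv p.1) 1 + Finsupp.single (yv p.2) 1 := by
    rw [MonomialOrder.degree_mul (X_ne_zero _) (X_ne_zero _), MonomialOrder.degree_X,
      MonomialOrder.degree_X]
  have h2 : mo.degree (-(X (yv p.1) * X (xv p.2)) : MvPolynomial (V ι) k) =
      Finsupp.single (yv p.1) 1 + Finsupp.single (xv p.2) 1 := by
    rw [MonomialOrder.degree_neg, MonomialOrder.degree_mul (X_ne_zero _) (X_ne_zero _),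
      MonomialOrder.degree_X, MonomialOrder.degree_X]
  have hdeg : mo.degree (bra (k := k) p) =
      Finsupp.single (xv p.1) 1 + Finsupp.single (yv p.2) 1 := by
    rw [bra, sub_eq_add_neg, MonomialOrder.degree_add_of_lt, h1]
    rw [h1, h2]
    apply mo_lt_of _ _ p.2
    · intro j hj
      simp [Finsupp.single_apply, hj.ne, (hp.trans hj).ne]
    · simp [Finsupp.single_apply, hp.ne]
  refine ⟨?_, hdeg⟩
  apply MonomialOrder.ne_zero_of_degree_ne_zero (m := mo)
  rw [hdeg]
  intro h
  have := DFunLike.congr_fun h (xv p.1)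
  simp at this

lemma degree_multiset_prod {α : Type*} (F : α → MvPolynomial (V ι) k) (D : α → (V ι →₀ ℕ))
    (s : Multiset α) (h : ∀ a ∈ s, F a ≠ 0 ∧ mo.degree (F a) = D a) :
    (s.map F).prod ≠ 0 ∧ mo.degree (s.map F).prod = (s.map D).sum := by
  induction s using Multiset.induction_on with
  | empty => simp
  | cons a s ih =>
    obtain ⟨h1, h2⟩ := ih (fun b hb => h b (Multiset.mem_cons_of_mem hb))
    obtain ⟨h3, h4⟩ := h a (Multiset.mem_cons_self a s)
    rw [Multiset.map_cons, Multiset.prod_cons, Multiset.map_cons, Multiset.sum_cons]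
    exact ⟨mul_ne_zero h3 h1, by rw [MonomialOrder.degree_mul h3 h1, h2, h4]⟩

variable (k) in
noncomputable def elemG (br : Multiset (ι × ι)) (us : Multiset ι) : MvPolynomial (V ι) k :=
  (br.map bra).prod * (us.map fun j => X (xv j)).prod

noncomputable def degG (A B : Multiset ι) : V ι →₀ ℕ :=
  (A.map fun a => Finsupp.single (xv a) 1).sum + (B.map fun a => Finsupp.single (yv a) 1).sum

lemma degG_x (A B : Multiset ι) (a : ι) : degG A B (xv a) = A.count a := by
  have h1 : ∀ A : Multiset ι, (A.map fun a => Finsupp.single (xv a) 1).sum (xv a) = A.count a := by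
    intro A
    induction A using Multiset.induction_on with
    | empty => simp
    | cons b s ih =>
      rw [Multiset.map_cons, Multiset.sum_cons, Finsupp.add_apply, ih, Multiset.count_cons,
        Finsupp.single_apply]
      simp [add_comm, eq_comm]
  have h2 : ∀ B : Multiset ι, (B.map fun a => Finsupp.single (yv a) 1).sum (xv a) = 0 := by
    intro A
    induction A using Multiset.induction_on with
    | empty => simp
    | cons b s ih =>
      rw [Multiset.map_cons, Multiset.sum_cons, Finsupp.add_apply, ih, Finsupp.single_apply]
      simp
  rw [degG, Finsupp.add_apply, h1, h2, add_zero]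

lemma degG_y (A B : Multiset ι) (a : ι) : degG A B (yv a) = B.count a := by
  have h1 : ∀ A : Multiset ι, (A.map fun a => Finsupp.single (yv a) 1).sum (yv a) = A.count a := by
    intro A
    induction A using Multiset.induction_on with
    | empty => simp
    | cons b s ih =>
      rw [Multiset.map_cons, Multiset.sum_cons, Finsupp.add_apply, ih, Multiset.count_cons,
        Finsupp.single_apply]
      simp [add_comm, eq_comm]
  have h2 : ∀ B : Multiset ι, (B.map fun a => Finsupp.single (xv a) 1).sum (yv a) = 0 := by
    intro A
    induction A using Multiset.induction_on with
    | empty => simp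
    | cons b s ih =>
      rw [Multiset.map_cons, Multiset.sum_cons, Finsupp.add_apply, ih, Finsupp.single_apply]
      simp
  rw [degG, Finsupp.add_apply, h1, h2, zero_add]

lemma elemG_degree (br : Multiset (ι × ι)) (us : Multiset ι) (h : Good br us) :
    elemG k br us ≠ 0 ∧ mo.degree (elemG k br us) =
      degG (br.map Prod.fst + us) (br.map Prod.snd) := by
  obtain ⟨h1, h2⟩ := degree_multiset_prod (k := k) bra
    (fun p : ι × ι => Finsupp.single (xv p.1) 1 + Finsupp.single (yv p.2) 1) br
    (fun p hp => bra_degree p (h.lt p hp))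
  obtain ⟨h3, h4⟩ := degree_multiset_prod (k := k) (fun j : ι => X (xv j))
    (fun j => Finsupp.single (xv j) 1) us
    (fun p hp => ⟨X_ne_zero _, MonomialOrder.degree_X⟩)
  refine ⟨mul_ne_zero h1 h3, ?_⟩
  rw [elemG, MonomialOrder.degree_mul h1 h3, h2, h4, degG, Multiset.sum_map_add]
  simp only [Multiset.map_add, Multiset.sum_add, Multiset.map_map, Function.comp_def]
  abel

lemma eJ_bra (p : ι × ι) : eJ Finset.univ (bra (k := k) p) = 0 := by
  simp [bra, eJ_x, eJ_y, Derivation.leibniz, mul_comm]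

lemma deriv_prod_zero (D : Derivation k (MvPolynomial (V ι) k) (MvPolynomial (V ι) k))
    (s : Multiset (MvPolynomial (V ι) k)) (h : ∀ a ∈ s, D a = 0) : D s.prod = 0 := by
  induction s using Multiset.induction_on with
  | empty => simp
  | cons a s ih =>
    rw [Multiset.prod_cons, Derivation.leibniz, h a (Multiset.mem_cons_self a s),
      ih (fun b hb => h b (Multiset.mem_cons_of_mem hb))]
    simp

lemma eJ_elemG (br : Multiset (ι × ι)) (us : Multiset ι) :
    eJ Finset.univ (elemG k br us) = 0 := by
  rw [elemG, Derivation.leibniz, deriv_prod_zero, deriv_prod_zero]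
  · simp
  · intro a ha
    obtain ⟨p, -, rfl⟩ := Multiset.mem_map.1 ha
    exact eJ_bra p
  · intro a ha
    obtain ⟨p, -, rfl⟩ := Multiset.mem_map.1 ha
    exact eJ_x _ p

variable (ι) in
abbrev GD := {p : Multiset (ι × ι) × Multiset ι // Good p.1 p.2}

variable (k) in
noncomputable def elemT (t : GD ι) : MvPolynomial (V ι) k := elemG k t.1.1 t.1.2

lemma elemT_degree_inj (t t' : GD ι)
    (h : mo.degree (elemT k t) = mo.degree (elemT k t')) : t = t' := by
  obtain ⟨⟨br, us⟩, hg⟩ := t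
  obtain ⟨⟨br', us'⟩, hg'⟩ := t'
  simp only [elemT] at h hg hg'
  rw [(elemG_degree br us hg).2, (elemG_degree br' us' hg').2] at h
  have hA : br.map Prod.fst + us = br'.map Prod.fst + us' := by
    ext a
    rw [← degG_x _ (br.map Prod.snd), h, degG_x]
  have hB : br.map Prod.snd = br'.map Prod.snd := by
    ext a
    rw [← degG_y (br.map Prod.fst + us), h, degG_y]
  obtain ⟨h1, h2⟩ := good_unique _ br br' us us' rfl hg hg' hA hB
  subst h1 h2
  rfl

lemma elemT_ne (t : GD ι) : elemT k t ≠ 0 := (elemG_degree _ _ t.2).1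

lemma elemT_linInd : LinearIndependent k (elemT (ι := ι) k) := by
  rw [linearIndependent_iff]
  intro l hl
  by_contra hne
  have hs : l.support.Nonempty := Finsupp.support_nonempty_iff.2 hne
  obtain ⟨t, ht, hmax⟩ := Finset.exists_max_image l.support
    (fun t => mo.toSyn (mo.degree (elemT k t))) hs
  have h1 := congrArg (coeff (mo.degree (elemT k t))) hl
  rw [Finsupp.linearCombination_apply, Finsupp.sum, coeff_sum, coeff_zero,
    Finset.sum_eq_single t] at h1
  · rw [coeff_smul, smul_eq_mul, mul_eq_zero] at h1
    rcases h1 with h1 | h1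
    · exact (Finsupp.mem_support_iff.1 ht) h1
    · exact elemT_ne t (MonomialOrder.coeff_degree_eq_zero_iff.1 h1)
  · intro t' ht' hne'
    rw [coeff_smul, MonomialOrder.coeff_eq_zero_of_lt, smul_zero]
    refine lt_of_le_of_ne (hmax t' ht') ?_
    intro h
    exact hne' (elemT_degree_inj t' t (mo.toSyn.injective h))
  · intro h; exact absurd ht h

lemma exists_elemT [CharZero k] (f : MvPolynomial (V ι) k) (hf : eJ Finset.univ f = 0)
    (hf0 : f ≠ 0) : ∃ t : GD ι, mo.degree (elemT k t) = mo.degree f := by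
  have hb := ballot_of_ker f hf (mo.degree f)
    (MonomialOrder.coeff_degree_ne_zero_iff.2 hf0) (by
      intro m hm b h
      by_contra! hlt
      exact hm (MonomialOrder.coeff_eq_zero_of_lt (mo_lt_of _ _ b h hlt)))
  set m₀ := mo.degree f
  let A : Multiset ι := ∑ a, m₀ (xv a) • {a}
  let B : Multiset ι := ∑ a, m₀ (yv a) • {a}
  have hc : ∀ (F : ι → ℕ) (P : ι → Prop) [DecidablePred P],
      Multiset.countP P (∑ a, F a • ({a} : Multiset ι)) = ∑ a with P a, F a := by
    intro F P _
    rw [← Multiset.coe_countPAddMonoidHom, map_sum, Finset.sum_filter]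
    refine Finset.sum_congr rfl fun a _ => ?_
    rw [map_nsmul, Multiset.coe_countPAddMonoidHom, ← Multiset.cons_zero, Multiset.countP_cons]
    split_ifs <;> simp
  obtain ⟨br, us, hg, hA, hB⟩ := good_exists _ A B rfl (by
    intro b
    rw [hc, hc]
    exact hb b)
  refine ⟨⟨(br, us), hg⟩, ?_⟩
  rw [elemT, (elemG_degree br us hg).2, hA, hB]
  have hcnt : ∀ (F : ι → ℕ) (a : ι), Multiset.count a (∑ a, F a • ({a} : Multiset ι)) = F a := by
    intro F a
    rw [Multiset.count, hc]
    simp [Finset.filter_eq]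
  ext i
  rcases V_cases i with ⟨a, rfl⟩ | ⟨a, rfl⟩
  · rw [degG_y, hcnt]
  · rw [degG_x, hcnt]

lemma elemT_span [CharZero k] : Submodule.span k (Set.range (elemT (ι := ι) k)) =
    LinearMap.ker (eJ (k := k) (Finset.univ : Finset ι)).toLinearMap := by
  apply le_antisymm
  · rw [Submodule.span_le]
    rintro _ ⟨t, rfl⟩
    exact eJ_elemG _ _
  · have key : ∀ (s : (mo : MonomialOrder (V ι)).syn) (f : MvPolynomial (V ι) k),
        mo.toSyn (mo.degree f) = s → eJ Finset.univ f = 0 →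
        f ∈ Submodule.span k (Set.range (elemT (ι := ι) k)) := by
      intro s
      induction s using WellFoundedLT.induction with
      | ind s ih =>
        intro f hs hf
        by_cases hf0 : f = 0
        · rw [hf0]; exact Submodule.zero_mem _
        obtain ⟨t, ht⟩ := exists_elemT f hf hf0
        have hmem : elemT k t ∈ Submodule.span k (Set.range (elemT (ι := ι) k)) :=
          Submodule.subset_span ⟨t, rfl⟩
        have hc0 : coeff (mo.degree f) (elemT k t) ≠ 0 := by
          rw [← ht]; exact MonomialOrder.coeff_degree_ne_zero_iff.2 (elemT_ne t)
        set c : k := coeff (mo.degree f) f / coeff (mo.degree f) (elemT k t) with hc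
        set g := f - c • elemT k t with hg
        have hgk : eJ Finset.univ g = 0 := by
          rw [hg, map_sub, Derivation.map_smul, hf, elemT, eJ_elemG, smul_zero, sub_zero]
        have hfg : f = g + c • elemT k t := by rw [hg]; abel
        have hgs : g ∈ Submodule.span k (Set.range (elemT (ι := ι) k)) := by
          by_cases hg0 : g = 0
          · rw [hg0]; exact Submodule.zero_mem _
          refine ih _ ?_ g rfl hgk
          have hle : mo.toSyn (mo.degree g) ≤ s :=
            MonomialOrder.degree_sub_le.trans
              (sup_le hs.le (MonomialOrder.degree_smul_le.trans (by rw [ht, hs])))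
          refine lt_of_le_of_ne hle ?_
          intro h
          rw [← hs] at h
          have h1 := mo.toSyn.injective h
          have h2 := MonomialOrder.coeff_degree_ne_zero_iff (m := mo).2 hg0
          apply h2
          rw [h1, hg, coeff_sub, coeff_smul, smul_eq_mul, hc, div_mul_cancel₀ _ hc0, sub_self]
        rw [hfg]
        exact Submodule.add_mem _ hgs (Submodule.smul_mem _ _ hmem)
    intro f hf
    exact key _ f rfl hf

end Alg
section Final

abbrev I2 (d : ℕ) := Fin d ⊕ₗ Fin d

def iu {d : ℕ} (j : Fin d) : I2 d := toLex (Sum.inl j)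
def iv {d : ℕ} (j : Fin d) : I2 d := toLex (Sum.inr j)

lemma I2_cases {d : ℕ} (i : I2 d) : (∃ a, i = iu a) ∨ ∃ a, i = iv a := by
  rcases i with a | a
  · exact Or.inl ⟨a, rfl⟩
  · exact Or.inr ⟨a, rfl⟩

@[simp] lemma iu_inj {d : ℕ} {a b : Fin d} : iu a = iu b ↔ a = b := by simp [iu]
@[simp] lemma iv_inj {d : ℕ} {a b : Fin d} : iv a = iv b ↔ a = b := by simp [iv]
@[simp] lemma iu_ne_iv {d : ℕ} {a b : Fin d} : iu a ≠ iv b := by simp [iu, iv]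
@[simp] lemma iv_ne_iu {d : ℕ} {a b : Fin d} : iv a ≠ iu b := by simp [iu, iv]
lemma iu_lt_iu {d : ℕ} {a b : Fin d} : iu a < iu b ↔ a < b := by simp [iu]
lemma iv_lt_iv {d : ℕ} {a b : Fin d} : iv a < iv b ↔ a < b := by simp [iv]
lemma iu_lt_iv {d : ℕ} {a b : Fin d} : iu a < iv b := by simp [iu, iv]
lemma not_iv_lt_iu {d : ℕ} {a b : Fin d} : ¬ iv a < iu b := by simp [iu, iv]

def pos {d : ℕ} (i : I2 d) : ℕ := Sum.elim (fun a : Fin d => a.val + 1)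
  (fun a : Fin d => a.val + 1 + d) (ofLex i)

lemma pos_iu {d : ℕ} (a : Fin d) : pos (iu a) = a.val + 1 := rfl
lemma pos_iv {d : ℕ} (a : Fin d) : pos (iv a) = a.val + 1 + d := rfl

lemma pos_lt {d : ℕ} (i j : I2 d) : pos i < pos j ↔ i < j := by
  rcases I2_cases i with ⟨a, rfl⟩ | ⟨a, rfl⟩ <;> rcases I2_cases j with ⟨b, rfl⟩ | ⟨b, rfl⟩
  · simp [pos_iu, iu_lt_iu]
  · simp only [pos_iu, pos_iv, iu_lt_iv, iff_true]; omega
  · simp only [pos_iu, pos_iv, not_iv_lt_iu, iff_false]; omega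
  · simp [pos_iv, iv_lt_iv]

def mB {d : ℕ} (p : Fin d × Fin d) : I2 d × I2 d := (iv p.1, iv p.2)
def mG {d : ℕ} (p : Fin d × Fin d) : I2 d × I2 d := (iu p.1, iv p.2)
def mA {d : ℕ} (p : Fin d × Fin d) : I2 d × I2 d := (iu p.1, iu p.2)

lemma mB_inj {d : ℕ} : Function.Injective (mB (d := d)) := by
  rintro ⟨a, b⟩ ⟨a', b'⟩ h; simpa [mB] using h
lemma mG_inj {d : ℕ} : Function.Injective (mG (d := d)) := by
  rintro ⟨a, b⟩ ⟨a', b'⟩ h; simpa [mG] using h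
lemma mA_inj {d : ℕ} : Function.Injective (mA (d := d)) := by
  rintro ⟨a, b⟩ ⟨a', b'⟩ h; simpa [mA] using h

def brOf {d : ℕ} (b g a : Multiset (Fin d × Fin d)) : Multiset (I2 d × I2 d) :=
  b.map mB + g.map mG + a.map mA
def usOf {d : ℕ} (vs us : Multiset (Fin d)) : Multiset (I2 d) := vs.map iv + us.map iu

lemma brOf_inj {d : ℕ} {b g a b' g' a' : Multiset (Fin d × Fin d)}
    (h : brOf b g a = brOf b' g' a') : b = b' ∧ g = g' ∧ a = a' := by
  have hc : ∀ (f1 f2 : Fin d × Fin d → I2 d × I2 d) (s : Multiset (Fin d × Fin d))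
      (p : Fin d × Fin d), (∀ q, f1 q ≠ f2 p) → (s.map f1).count (f2 p) = 0 := by
    intro f1 f2 s p hne
    rw [Multiset.count_eq_zero]
    intro hm
    obtain ⟨q, -, hq⟩ := Multiset.mem_map.1 hm
    exact hne q hq
  refine ⟨?_, ?_, ?_⟩ <;> ext p
  · have := congrArg (Multiset.count (mB p)) h
    simpa only [brOf, Multiset.count_add, hc mG mB _ p (by simp [mG, mB]),
      hc mA mB _ p (by simp [mA, mB]), Multiset.count_map_eq_count' _ _ mB_inj, add_zero] using this
  · have := congrArg (Multiset.count (mG p)) h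
    simpa only [brOf, Multiset.count_add, hc mB mG _ p (by simp [mG, mB]),
      hc mA mG _ p (by simp [mA, mG]), Multiset.count_map_eq_count' _ _ mG_inj, add_zero,
      zero_add] using this
  · have := congrArg (Multiset.count (mA p)) h
    simpa only [brOf, Multiset.count_add, hc mB mA _ p (by simp [mA, mB]),
      hc mG mA _ p (by simp [mA, mG]), Multiset.count_map_eq_count' _ _ mA_inj, add_zero,
      zero_add] using this

lemma usOf_inj {d : ℕ} {a b a' b' : Multiset (Fin d)}
    (h : usOf a b = usOf a' b') : a = a' ∧ b = b' := by
  have hc : ∀ (f1 f2 : Fin d → I2 d) (s : Multiset (Fin d))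
      (p : Fin d), (∀ q, f1 q ≠ f2 p) → (s.map f1).count (f2 p) = 0 := by
    intro f1 f2 s p hne
    rw [Multiset.count_eq_zero]
    intro hm
    obtain ⟨q, -, hq⟩ := Multiset.mem_map.1 hm
    exact hne q hq
  have h1 : Function.Injective (iv (d := d)) := fun _ _ h => iv_inj.1 h
  have h2 : Function.Injective (iu (d := d)) := fun _ _ h => iu_inj.1 h
  refine ⟨?_, ?_⟩ <;> ext p
  · have := congrArg (Multiset.count (iv p)) h
    simpa only [usOf, Multiset.count_add, hc iu iv _ p (by simp),
      Multiset.count_map_eq_count' _ _ h1, add_zero] using this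
  · have := congrArg (Multiset.count (iu p)) h
    simpa only [usOf, Multiset.count_add, hc iv iu _ p (by simp),
      Multiset.count_map_eq_count' _ _ h2, zero_add] using this

lemma brOf_surj {d : ℕ} (br : Multiset (I2 d × I2 d)) (h : ∀ p ∈ br, p.1 < p.2) :
    ∃ b g a, br = brOf b g a := by
  induction br using Multiset.induction_on with
  | empty => exact ⟨0, 0, 0, rfl⟩
  | cons p s ih =>
    obtain ⟨b, g, a, rfl⟩ := ih (fun q hq => h q (Multiset.mem_cons_of_mem hq))
    have hp := h p (Multiset.mem_cons_self _ _)
    obtain ⟨p1, p2⟩ := p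
    rcases I2_cases p1 with ⟨x, rfl⟩ | ⟨x, rfl⟩ <;> rcases I2_cases p2 with ⟨y, rfl⟩ | ⟨y, rfl⟩
    · exact ⟨b, g, (x, y) ::ₘ a, by simp [brOf, mA]⟩
    · exact ⟨b, (x, y) ::ₘ g, a, by simp [brOf, mG]⟩
    · exact absurd hp not_iv_lt_iu
    · exact ⟨(x, y) ::ₘ b, g, a, by simp [brOf, mB]⟩

lemma usOf_surj {d : ℕ} (us : Multiset (I2 d)) : ∃ a b, us = usOf a b := by
  induction us using Multiset.induction_on with
  | empty => exact ⟨0, 0, rfl⟩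
  | cons p s ih =>
    obtain ⟨a, b, rfl⟩ := ih
    rcases I2_cases p with ⟨x, rfl⟩ | ⟨x, rfl⟩
    · exact ⟨a, x ::ₘ b, by simp [usOf]⟩
    · exact ⟨x ::ₘ a, b, by simp [usOf]⟩

lemma ints_eq {d : ℕ} (b g a : Multiset (Fin d × Fin d)) :
    b.map (βInt d) + g.map (γInt d) + a.map (αInt d) =
      (brOf b g a).map (fun p => (pos p.1, pos p.2)) := by
  simp only [brOf, Multiset.map_add, Multiset.map_map]
  rfl

lemma pts_eq {d : ℕ} (vs us : Multiset (Fin d)) :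
    vs.map (vPt d) + us.map (uPt d) = (usOf vs us).map pos := by
  simp only [usOf, Multiset.map_add, Multiset.map_map]
  rfl

lemma intersects_iff {d : ℕ} (p q : I2 d × I2 d) :
    Intersects (pos p.1, pos p.2) (pos q.1, pos q.2) ↔
      (p.1 < q.1 ∧ q.1 < p.2 ∧ p.2 < q.2) ∨ (q.1 < p.1 ∧ p.1 < q.2 ∧ q.2 < p.2) := by
  simp only [← pos_lt, Intersects, Meets, Inside]
  omega

lemma Datum.good {d : ℕ} (t : Datum d) :
    Good (brOf t.betas t.gammas t.alphas) (usOf t.vs t.us) := by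
  have h1 := t.no_intersect
  have h2 := t.no_cover
  rw [ints_eq] at h1 h2
  rw [pts_eq] at h2
  refine ⟨?_, ?_, ?_⟩
  · intro p hp
    simp only [brOf, Multiset.mem_add, Multiset.mem_map] at hp
    rcases hp with (⟨q, hq, rfl⟩ | ⟨q, hq, rfl⟩) | ⟨q, hq, rfl⟩
    · exact iv_lt_iv.2 (t.betas_lt q hq)
    · exact iu_lt_iv
    · exact iu_lt_iu.2 (t.alphas_lt q hq)
  · intro p hp q hq h
    exact h1 _ (Multiset.mem_map.2 ⟨p, hp, rfl⟩) _ (Multiset.mem_map.2 ⟨q, hq, rfl⟩)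
      ((intersects_iff p q).2 (Or.inl h))
  · intro p hp c hc h
    exact h2 _ (Multiset.mem_map.2 ⟨p, hp, rfl⟩) _ (Multiset.mem_map.2 ⟨c, hc, rfl⟩)
      ⟨(pos_lt _ _).2 h.1, (pos_lt _ _).2 h.2⟩

def toGD {d : ℕ} (t : Datum d) : GD (I2 d) :=
  ⟨(brOf t.betas t.gammas t.alphas, usOf t.vs t.us), t.good⟩

lemma toGD_inj {d : ℕ} : Function.Injective (toGD (d := d)) := by
  intro t t' h
  have h0 := congrArg Subtype.val h
  obtain ⟨h1, h2, h3⟩ := brOf_inj (congrArg Prod.fst h0)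
  obtain ⟨h4, h5⟩ := usOf_inj (congrArg Prod.snd h0)
  cases t
  cases t'
  simp only at h1 h2 h3 h4 h5
  subst h1 h2 h3 h4 h5
  rfl

lemma toGD_surj {d : ℕ} : Function.Surjective (toGD (d := d)) := by
  rintro ⟨⟨br, us⟩, hg⟩
  obtain ⟨b, g, a, rfl⟩ := brOf_surj br hg.lt
  obtain ⟨vs, us, rfl⟩ := usOf_surj us
  refine ⟨⟨vs, b, g, a, us, ?_, ?_, ?_, ?_⟩, rfl⟩
  · intro p hp
    exact iv_lt_iv.1 (hg.lt (mB p) (by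
      simp only [brOf, Multiset.mem_add]
      exact Or.inl (Or.inl (Multiset.mem_map_of_mem _ hp))))
  · intro p hp
    exact iu_lt_iu.1 (hg.lt (mA p) (by
      simp only [brOf, Multiset.mem_add]
      exact Or.inr (Multiset.mem_map_of_mem _ hp)))
  · rw [ints_eq]
    intro I hI J hJ h
    obtain ⟨p, hp, rfl⟩ := Multiset.mem_map.1 hI
    obtain ⟨q, hq, rfl⟩ := Multiset.mem_map.1 hJ
    rcases (intersects_iff p q).1 h with h | h
    · exact hg.nc p hp q hq h
    · exact hg.nc q hq p hp h
  · rw [ints_eq, pts_eq]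
    intro I hI c hc h
    obtain ⟨p, hp, rfl⟩ := Multiset.mem_map.1 hI
    obtain ⟨q, hq, rfl⟩ := Multiset.mem_map.1 hc
    exact hg.ncov p hp q hq ⟨(pos_lt _ _).1 h.1, (pos_lt _ _).1 h.2⟩

def varMap {d : ℕ} : (Fin d × Fin 2) ⊕ (Fin d × Fin 2) → V (I2 d) :=
  Sum.elim (fun p => if p.2 = 0 then xv (iu p.1) else yv (iu p.1))
    (fun p => if p.2 = 0 then xv (iv p.1) else yv (iv p.1))

lemma varMap_bij {d : ℕ} : Function.Bijective (varMap (d := d)) := by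
  constructor
  · rintro (⟨a, i⟩ | ⟨a, i⟩) (⟨b, j⟩ | ⟨b, j⟩) h <;> fin_cases i <;> fin_cases j <;>
      simp_all [varMap]
  · intro i
    rcases V_cases i with ⟨a, rfl⟩ | ⟨a, rfl⟩ <;> rcases I2_cases a with ⟨a, rfl⟩ | ⟨a, rfl⟩
    · exact ⟨Sum.inl (a, 1), by simp [varMap]⟩
    · exact ⟨Sum.inr (a, 1), by simp [varMap]⟩
    · exact ⟨Sum.inl (a, 0), by simp [varMap]⟩
    · exact ⟨Sum.inr (a, 0), by simp [varMap]⟩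

noncomputable def Psi : S K d ≃ₐ[K] MvPolynomial (V (I2 d)) K :=
  renameEquiv K (Equiv.ofBijective varMap varMap_bij)

lemma Psi_u0 (j : Fin d) : Psi K d (u K d (j, 0)) = X (xv (iu j)) := by
  simp [Psi, u, varMap]
lemma Psi_u1 (j : Fin d) : Psi K d (u K d (j, 1)) = X (yv (iu j)) := by
  simp [Psi, u, varMap]
lemma Psi_v0 (j : Fin d) : Psi K d (v K d (j, 0)) = X (xv (iv j)) := by
  simp [Psi, v, varMap]
lemma Psi_v1 (j : Fin d) : Psi K d (v K d (j, 1)) = X (yv (iv j)) := by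
  simp [Psi, v, varMap]

lemma Psi_toElem (t : Datum d) : Psi K d (t.toElem K d) = elemT K (toGD t) := by
  simp only [Datum.toElem, elemT, elemG, toGD, brOf, usOf, map_mul, map_multiset_prod,
    Multiset.map_map, Multiset.map_add, Multiset.prod_add, Function.comp_def, α, β, γ, map_sub,
    Psi_u0, Psi_u1, Psi_v0, Psi_v1, bra, mA, mB, mG]
  ring

lemma Psi_deriv (δS : Derivation K (S K d) (S K d))
    (hu0 : ∀ i : Fin d, δS (u K d (i, 0)) = 0)
    (hu1 : ∀ i : Fin d, δS (u K d (i, 1)) = u K d (i, 0))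
    (hv0 : ∀ i : Fin d, δS (v K d (i, 0)) = 0)
    (hv1 : ∀ i : Fin d, δS (v K d (i, 1)) = v K d (i, 0)) (f : S K d) :
    Psi K d (δS f) = eJ Finset.univ (Psi K d f) := by
  induction f using MvPolynomial.induction_on with
  | C a =>
    rw [derivation_C, map_zero]
    have : Psi K d (C a) = C a := by simp [Psi]
    rw [this, derivation_C]
  | add p q hp hq => rw [map_add, map_add, map_add, map_add, hp, hq]
  | mul_X p i hp =>
    have hX : Psi K d (δS (X i)) = eJ Finset.univ (Psi K d (X i)) := by
      rcases i with ⟨a, i⟩ | ⟨a, i⟩ <;> fin_cases i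
      · change Psi K d (δS (u K d (a, 0))) = eJ Finset.univ (Psi K d (u K d (a, 0)))
        rw [hu0, Psi_u0, eJ_x, map_zero]
      · change Psi K d (δS (u K d (a, 1))) = eJ Finset.univ (Psi K d (u K d (a, 1)))
        rw [hu1, Psi_u0, Psi_u1, eJ_y, if_pos (Finset.mem_univ _)]
      · change Psi K d (δS (v K d (a, 0))) = eJ Finset.univ (Psi K d (v K d (a, 0)))
        rw [hv0, Psi_v0, eJ_x, map_zero]
      · change Psi K d (δS (v K d (a, 1))) = eJ Finset.univ (Psi K d (v K d (a, 1)))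
        rw [hv1, Psi_v0, Psi_v1, eJ_y, if_pos (Finset.mem_univ _)]
    rw [Derivation.leibniz, map_add, smul_eq_mul, smul_eq_mul, map_mul, map_mul, map_mul,
      Derivation.leibniz, hp, hX, smul_eq_mul, smul_eq_mul]

end Final

/-- The admissible products are pairwise distinct and form a `K`-vector space basis of
the algebra of constants `S^δ = ker δ_S`. -/
theorem stmt2 [CharZero K] (hd : 1 ≤ d)
    (δS : Derivation K (S K d) (S K d))
    (hu0 : ∀ i : Fin d, δS (u K d (i, 0)) = 0)
    (hu1 : ∀ i : Fin d, δS (u K d (i, 1)) = u K d (i, 0))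
    (hv0 : ∀ i : Fin d, δS (v K d (i, 0)) = 0)
    (hv1 : ∀ i : Fin d, δS (v K d (i, 1)) = v K d (i, 0)) :
    Function.Injective (Datum.toElem K d) ∧
      LinearIndependent K (Datum.toElem K d) ∧
      Submodule.span K (Set.range (Datum.toElem K d)) = LinearMap.ker δS.toLinearMap := by
  have hcomp : (Psi K d).toLinearMap ∘ Datum.toElem K d = elemT K ∘ toGD := by
    funext t
    exact Psi_toElem K d t
  have hli : LinearIndependent K (Datum.toElem K d) := by
    apply LinearIndependent.of_comp (Psi K d).toLinearMap
    rw [hcomp]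
    exact elemT_linInd.comp _ toGD_inj
  refine ⟨hli.injective, hli, ?_⟩
  have hinj : Function.Injective (Psi K d).toLinearMap := (Psi K d).injective
  apply Submodule.map_injective_of_injective hinj
  rw [Submodule.map_span, ← Set.range_comp, hcomp, toGD_surj.range_comp, elemT_span]
  ext f
  simp only [LinearMap.mem_ker, Submodule.mem_map]
  constructor
  · intro hf
    refine ⟨(Psi K d).symm f, ?_, (Psi K d).apply_symm_apply f⟩
    apply (Psi K d).injective
    have := Psi_deriv K d δS hu0 hu1 hv0 hv1 ((Psi K d).symm f)
    rw [(Psi K d).apply_symm_apply] at this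
    rw [map_zero]
    exact this.trans hf
  · rintro ⟨g, hg, rfl⟩
    have := Psi_deriv K d δS hu0 hu1 hv0 hv1 g
    have hg' : δS g = 0 := hg
    rw [hg', map_zero] at this
    exact this.symm

end Stmt2
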